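/- Let K : ℝ → ℝ → ℝ be a smooth function of (x,t) satisfying the Kupershmidt equation K_t = K_{5x} - 5K_xK_{xxx} - 5K_{xx}² - 5K²K_{xxx} - 20KK_xK_{xx} - 5K_x³ + 5K⁴K_x. Then k := -K_x - (1/2)K² satisfies the k-equation k_t = k_{5x} + 10kk_{xxx} + 25k_xk_{xx} + 20k²k_x. -/

import Mathlib

/-!
Write `Kⱼ` for the `j`-th `x`-derivative of `K` and `F` for the right-hand side of the Kupershmidt
equation. With `k = -K₁ - K²/2`, mixed partial derivatives commute, so
`k_t = -(K_t)_x - K K_t = -F_x - K F`. This is a differential polynomial in `K`, and so is the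
right-hand side of the `k`-equation once `k_x, …, k_{5x}` are expanded by the Leibniz rule; the two
polynomials in `K, K₁, …, K₆` coincide. The analytic input is that a smooth function has smooth
partial derivatives (`SmoothXT.dx`) and that these commute (`SmoothXT.dt_dx`).
-/

/-- Total `x`-derivative of a function of `(x, t)`. -/
noncomputable def dx (f : ℝ → ℝ → ℝ) : ℝ → ℝ → ℝ := fun x t => deriv (fun y => f y t) x

/-- Total `t`-derivative of a function of `(x, t)`. -/
noncomputable def dt (f : ℝ → ℝ → ℝ) : ℝ → ℝ → ℝ := fun x t => deriv (fun s => f x s) t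

/-- The Kupershmidt equation. -/
def Kupershmidt (K : ℝ → ℝ → ℝ) : Prop :=
  ∀ x t, dt K x t =
    dx (dx (dx (dx (dx K)))) x t
    - 5 * dx K x t * dx (dx (dx K)) x t
    - 5 * (dx (dx K) x t)^2
    - 5 * (K x t)^2 * dx (dx (dx K)) x t
    - 20 * K x t * dx K x t * dx (dx K) x t
    - 5 * (dx K x t)^3
    + 5 * (K x t)^4 * dx K x t

/-- The `k`-equation. -/
def KEq (k : ℝ → ℝ → ℝ) : Prop :=
  ∀ x t, dt k x t =
    dx (dx (dx (dx (dx k)))) x t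
    + 10 * k x t * dx (dx (dx k)) x t
    + 25 * dx k x t * dx (dx k) x t
    + 20 * (k x t)^2 * dx k x t

/-- Joint smoothness of a function of `(x, t)` given in curried form. -/
def SmoothXT (f : ℝ → ℝ → ℝ) : Prop := ContDiff ℝ (⊤ : ℕ∞) (fun p : ℝ × ℝ => f p.1 p.2)

namespace SmoothXT

variable {f : ℝ → ℝ → ℝ}

lemma hasFDerivAt (hf : SmoothXT f) (p : ℝ × ℝ) :
    HasFDerivAt (fun p : ℝ × ℝ => f p.1 p.2)
      (fderiv ℝ (fun p : ℝ × ℝ => f p.1 p.2) p) p :=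
  (ContDiff.differentiable hf (by simp) p).hasFDerivAt

lemma hasDerivAt_fst (hf : SmoothXT f) (x t : ℝ) :
    HasDerivAt (fun y => f y t) (fderiv ℝ (fun p : ℝ × ℝ => f p.1 p.2) (x, t) (1, 0)) x :=
  HasFDerivAt.comp_hasDerivAt (f := fun y => (y, t)) x (hf.hasFDerivAt (x, t))
    ((hasDerivAt_id x).prodMk (hasDerivAt_const x t))

lemma hasDerivAt_snd (hf : SmoothXT f) (x t : ℝ) :
    HasDerivAt (fun s => f x s) (fderiv ℝ (fun p : ℝ × ℝ => f p.1 p.2) (x, t) (0, 1)) t :=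
  HasFDerivAt.comp_hasDerivAt (f := fun s => (x, s)) t (hf.hasFDerivAt (x, t))
    ((hasDerivAt_const t x).prodMk (hasDerivAt_id t))

lemma dx_eq (hf : SmoothXT f) (x t : ℝ) :
    _root_.dx f x t = fderiv ℝ (fun p : ℝ × ℝ => f p.1 p.2) (x, t) (1, 0) :=
  (hf.hasDerivAt_fst x t).deriv

lemma dt_eq (hf : SmoothXT f) (x t : ℝ) :
    _root_.dt f x t = fderiv ℝ (fun p : ℝ × ℝ => f p.1 p.2) (x, t) (0, 1) :=
  (hf.hasDerivAt_snd x t).deriv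

lemma hasDerivAt_dx (hf : SmoothXT f) (x t : ℝ) :
    HasDerivAt (fun y => f y t) (_root_.dx f x t) x :=
  (hf.hasDerivAt_fst x t).differentiableAt.hasDerivAt

lemma hasDerivAt_dt (hf : SmoothXT f) (x t : ℝ) :
    HasDerivAt (fun s => f x s) (_root_.dt f x t) t :=
  (hf.hasDerivAt_snd x t).differentiableAt.hasDerivAt

lemma contDiff_fderiv (hf : SmoothXT f) :
    ContDiff ℝ (⊤ : ℕ∞) (fderiv ℝ (fun p : ℝ × ℝ => f p.1 p.2)) :=
  ContDiff.fderiv_right hf (by simp)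

lemma dx (hf : SmoothXT f) : SmoothXT (_root_.dx f) := by
  unfold SmoothXT
  simp only [hf.dx_eq]
  exact hf.contDiff_fderiv.clm_apply contDiff_const

lemma dt (hf : SmoothXT f) : SmoothXT (_root_.dt f) := by
  unfold SmoothXT
  simp only [hf.dt_eq]
  exact hf.contDiff_fderiv.clm_apply contDiff_const

/-- Mixed partial derivatives commute: both are values of the symmetric second derivative of the
uncurried function at `(1, 0)` and `(0, 1)`. -/
lemma dt_dx (hf : SmoothXT f) (x t : ℝ) :
    _root_.dt (_root_.dx f) x t = _root_.dx (_root_.dt f) x t := by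
  have hsymm : IsSymmSndFDerivAt ℝ (fun p : ℝ × ℝ => f p.1 p.2) (x, t) :=
    (ContDiff.contDiffAt hf).isSymmSndFDerivAt (by
      simpa using WithTop.coe_le_coe.2 (le_top : (2 : ℕ∞) ≤ ⊤))
  have hdiff : DifferentiableAt ℝ (fderiv ℝ (fun p : ℝ × ℝ => f p.1 p.2)) (x, t) :=
    hf.contDiff_fderiv.differentiable (by simp) _
  rw [hf.dx.dt_eq, hf.dt.dx_eq]
  simp only [hf.dx_eq, hf.dt_eq]
  rw [fderiv_clm_apply hdiff (by fun_prop), fderiv_clm_apply hdiff (by fun_prop)]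
  simpa using hsymm (0, 1) (1, 0)

end SmoothXT

/-- The Miura transformation `k = -K_x - K²/2` maps the Kupershmidt equation to the
`k`-equation. -/
theorem miura_kupershmidt_to_k_equation
    (K : ℝ → ℝ → ℝ)
    (hK : ContDiff ℝ (⊤ : ℕ∞) (fun p : ℝ × ℝ => K p.1 p.2))
    (heq : Kupershmidt K) :
    KEq (fun x t => -(dx K x t) - (1/2) * (K x t)^2) := by
  have s0 : SmoothXT K := hK
  have hmixed := s0.dt_dx
  have hdtK := s0.hasDerivAt_dt
  have hdtK1 := s0.dx.hasDerivAt_dt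
  have h0 := s0.hasDerivAt_dx
  have h1 := s0.dx.hasDerivAt_dx
  have h2 := s0.dx.dx.hasDerivAt_dx
  have h3 := s0.dx.dx.dx.hasDerivAt_dx
  have h4 := s0.dx.dx.dx.dx.hasDerivAt_dx
  have h5 := s0.dx.dx.dx.dx.dx.hasDerivAt_dx
  have hF : dt K = _ := funext fun x => funext fun t => heq x t
  rw [hF] at hmixed
  simp only [hF] at hdtK
  -- From here on the `x`-derivatives of `K` enter only through `h0`, …, `h5`.
  generalize dx (dx (dx (dx (dx (dx K))))) = K6 at *
  generalize dx (dx (dx (dx (dx K)))) = K5 at *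
  generalize dx (dx (dx (dx K))) = K4 at *
  generalize dx (dx (dx K)) = K3 at *
  generalize dx (dx K) = K2 at *
  generalize dx K = K1 at *
  have e1 : dx (fun x t => -(K1 x t) - (1/2) * (K x t)^2)
      = fun x t => -K2 x t - K x t * K1 x t := by
    funext x t
    refine HasDerivAt.deriv (((h1 x t).neg.sub (((h0 x t).pow 2).const_mul (1/2))).congr_deriv ?_)
    push_cast; ring
  have e2 : dx (fun x t => -K2 x t - K x t * K1 x t)
      = fun x t => -K3 x t - K1 x t ^ 2 - K x t * K2 x t := by
    funext x t
    refine HasDerivAt.deriv (((h2 x t).neg.sub ((h0 x t).mul (h1 x t))).congr_deriv ?_)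
    ring
  have e3 : dx (fun x t => -K3 x t - K1 x t ^ 2 - K x t * K2 x t)
      = fun x t => -K4 x t - 3 * (K1 x t * K2 x t) - K x t * K3 x t := by
    funext x t
    refine HasDerivAt.deriv ((((h3 x t).neg.sub ((h1 x t).pow 2)).sub
      ((h0 x t).mul (h2 x t))).congr_deriv ?_)
    push_cast; ring
  have e4 : dx (fun x t => -K4 x t - 3 * (K1 x t * K2 x t) - K x t * K3 x t)
      = fun x t => -K5 x t - 3 * K2 x t ^ 2 - 4 * (K1 x t * K3 x t) - K x t * K4 x t := by
    funext x t
    refine HasDerivAt.deriv ((((h4 x t).neg.sub (((h1 x t).mul (h2 x t)).const_mul 3)).sub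
      ((h0 x t).mul (h3 x t))).congr_deriv ?_)
    ring
  have e5 : dx (fun x t => -K5 x t - 3 * K2 x t ^ 2 - 4 * (K1 x t * K3 x t) - K x t * K4 x t)
      = fun x t => -K6 x t - 10 * (K2 x t * K3 x t) - 5 * (K1 x t * K4 x t)
        - K x t * K5 x t := by
    funext x t
    refine HasDerivAt.deriv (((((h5 x t).neg.sub (((h2 x t).pow 2).const_mul 3)).sub
      (((h1 x t).mul (h3 x t)).const_mul 4)).sub ((h0 x t).mul (h4 x t))).congr_deriv ?_)
    push_cast; ring
  intro x t
  rw [e1, e2, e3, e4, e5]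
  have hkt : dt (fun x t => -(K1 x t) - (1/2) * (K x t)^2) x t = _ :=
    ((hdtK1 x t).neg.sub (((hdtK x t).pow 2).const_mul (1/2))).deriv
  -- The summands follow those of the Kupershmidt right-hand side one by one.
  have hFx := ((((((h5 x t).sub (((h1 x t).const_mul 5).mul (h3 x t))).sub
    (((h2 x t).pow 2).const_mul 5)).sub ((((h0 x t).pow 2).const_mul 5).mul (h3 x t))).sub
    ((((h0 x t).const_mul 20).mul (h1 x t)).mul (h2 x t))).sub
    (((h1 x t).pow 3).const_mul 5)).add ((((h0 x t).pow 4).const_mul 5).mul (h1 x t))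
  rw [hkt, (hmixed x t).trans hFx.deriv]
  simp only [Pi.mul_apply, Pi.pow_apply]
  push_cast
  ring
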